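/- Let G be a graph of order n with diameter at least k, where k ≥ 2. Then the spectral radius of the adjacency matrix of G satisfies ρ(A(G)) ≤ ρ(A(B_{n−k+2,⌊k/2⌋,⌈k/2⌉})), with equality holding if and only if G is isomorphic to B_{n−k+2,⌊k/2⌋,⌈k/2⌉}. -/

import Mathlib

/-!
A level function of height `k` is a map `f : V → ℕ` with image `{0, …, k}`; its level graph joins
distinct vertices whose levels differ by at most one. Distance from an end of a diametral pair,
truncated at `k`, is a level function, and `G` is a subgraph of its level graph (`exists_level`).
Since `G` is connected, `ρ(G) ≤ ρ(levelGraph f)` with equality only if `G = levelGraph f`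
(`rhoAdj_mono`). There are finitely many level functions, so it is enough to show that every one
that maximizes `ρ` has a level graph isomorphic to the bug graph (`iso_of_max`).

Each step compares quadratic forms at the positive Perron vector `x` of the current graph
(`rhoAdj_compare`): if another level graph has an at least equally large form at `x`, then by
maximality it has the same radius and `x` is an eigenvector of both graphs.

* `concentrate`: choose one representative in each level and move all other vertices to the level
  whose window of three consecutive representatives has the largest total weight. The form does not
  decrease, and the common eigenvector forces the vertices to have been there already. So all levels
  except one, `c`, are singletons.
* `balance`: if level `c` has at least two vertices then `ρ ≥ 5/2`, and along both paths the
  entries of `x` are multiples of the sequence `s₀ = 0, s₁ = 1, sᵢ₊₂ = ρ sᵢ₊₁ - sᵢ`, which grows at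
  least by the factor `2` at each step. If one path is longer than the other by at least two, the
  entry at the end of the short path is at least the entry next to the end of the long one, and
  moving the last vertex of the long path to the end of the short one contradicts maximality.

Hence `c` is `⌊k/2⌋` or `⌈k/2⌉`, and up to reversing the levels the graph is the bug graph, which
is itself a level graph (`iso_bug`).
-/

/-- The spectral radius (largest eigenvalue) of a real symmetric matrix, as the
supremum of its set of real eigenvalues. -/
noncomputable def specRad {n : Type*} [Fintype n] (M : Matrix n n ℝ) : ℝ :=
  sSup {t : ℝ | ∃ v : n → ℝ, v ≠ 0 ∧ M.mulVec v = t • v}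

/-- The bug graph `B_{p,q,r}`: the complete graph `K_p` minus an edge `{u,v}`, with a
path on `q` vertices attached at `u` and a path on `r` vertices attached at `v`
(attaching means identifying one end of the path with the root, so `B_{p,q,r}` has
`p+q+r-2` vertices). Vertices `0,…,q-1` form the first path (with `u = q-1`),
vertices `q-1,…,q+p-2` form the clique with the edge `{q-1, q+p-2}` removed, and
vertices `q+p-2,…,p+q+r-3` form the second path (with `v = q+p-2`). -/
def bugGraph (p q r : ℕ) : SimpleGraph (Fin (p + q + r - 2)) :=
  SimpleGraph.fromRel (fun i j =>
    (i.val + 1 = j.val ∧ j.val ≤ q - 1) ∨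
    (q - 1 ≤ i.val ∧ i.val ≤ q + p - 2 ∧ q - 1 ≤ j.val ∧ j.val ≤ q + p - 2 ∧
      ¬(i.val = q - 1 ∧ j.val = q + p - 2) ∧ ¬(j.val = q - 1 ∧ i.val = q + p - 2)) ∨
    (i.val + 1 = j.val ∧ q + p - 2 ≤ i.val))

/-- The spectral radius `ρ(A(G))` of the adjacency matrix of `G`. -/
noncomputable def rhoAdj {V : Type*} [Fintype V] [DecidableEq V]
    (G : SimpleGraph V) : ℝ :=
  letI := Classical.decRel G.Adj
  specRad (G.adjMatrix ℝ)

set_option linter.unusedSectionVars false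

/-! ### Spectral radius, Perron vectors and comparison -/

open Matrix in
/-- For a symmetric matrix the supremum `specRad A` is attained, and it bounds the whole spectrum:
`specRad A • 1 - A` is positive semidefinite. -/
lemma specRad_spec {n : Type*} [Fintype n] [DecidableEq n] [Nonempty n] (A : Matrix n n ℝ)
    (hA : A.IsHermitian) :
    (specRad A • (1 : Matrix n n ℝ) - A).PosSemidef ∧
      ∃ v : n → ℝ, v ≠ 0 ∧ A *ᵥ v = specRad A • v := by
  set E : Set ℝ := {t : ℝ | ∃ v : n → ℝ, v ≠ 0 ∧ A *ᵥ v = t • v} with hE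
  have hfin : E.Finite := by
    refine (Module.End.finite_hasEigenvalue (Matrix.toLin' A)).subset ?_
    rintro t ⟨v, hv, h⟩
    exact Module.End.hasEigenvalue_of_hasEigenvector
      (Module.End.hasEigenvector_iff.2 ⟨Module.End.mem_eigenspace_iff.2 (by simpa using h), hv⟩)
  have hne : E.Nonempty := by
    obtain ⟨i⟩ := ‹Nonempty n›
    refine ⟨hA.eigenvalues i, hA.eigenvectorBasis i, ?_, hA.mulVec_eigenvectorBasis i⟩
    intro h
    have := hA.eigenvectorBasis.orthonormal.ne_zero i
    exact this (by ext j; exact congrFun h j)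
  have hmem : specRad A ∈ E := hne.csSup_mem hfin
  refine ⟨?_, hmem⟩
  have hH : (specRad A • (1 : Matrix n n ℝ) - A).IsHermitian := by
    refine IsHermitian.sub ?_ hA
    simp [IsHermitian]
  rw [hH.posSemidef_iff_eigenvalues_nonneg]
  intro i
  have h := hH.mulVec_eigenvectorBasis i
  have hle : specRad A - hH.eigenvalues i ≤ specRad A := by
    refine le_csSup hfin.bddAbove ⟨hH.eigenvectorBasis i, ?_, ?_⟩
    · intro h
      have := hH.eigenvectorBasis.orthonormal.ne_zero i
      exact this (by ext j; exact congrFun h j)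
    · rw [sub_mulVec, smul_mulVec, one_mulVec] at h
      rw [sub_smul, ← h, sub_sub_cancel]
  simpa using hle

/-- The adjacency matrix over `ℝ`, with classical decidability of adjacency. -/
noncomputable def adjM {V : Type*} [DecidableEq V] (G : SimpleGraph V) : Matrix V V ℝ :=
  letI := Classical.decRel G.Adj
  G.adjMatrix ℝ

open Classical in
lemma adjM_apply {V : Type*} [DecidableEq V] (G : SimpleGraph V) (a b : V) :
    adjM G a b = if G.Adj a b then 1 else 0 := by
  simp [adjM, SimpleGraph.adjMatrix_apply]

lemma adjM_congr {V U : Type*} [DecidableEq V] [DecidableEq U] {G : SimpleGraph V}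
    {H : SimpleGraph U} {a b : V} {c d : U} (h : G.Adj a b ↔ H.Adj c d) :
    adjM G a b = adjM H c d := by
  rw [adjM_apply, adjM_apply]
  by_cases h' : G.Adj a b
  · rw [if_pos h', if_pos (h.1 h')]
  · rw [if_neg h', if_neg (fun h2 => h' (h.2 h2))]

section
variable {V : Type*} [Fintype V] [DecidableEq V]
open Matrix

lemma adjM_isHermitian (G : SimpleGraph V) : (adjM G).IsHermitian := by
  ext a b
  simpa using adjM_congr (G.adj_comm b a)

lemma rhoAdj_eq (G : SimpleGraph V) : rhoAdj G = specRad (adjM G) := rfl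

lemma rhoAdj_form (G : SimpleGraph V) (x : V → ℝ) :
    x ⬝ᵥ ((rhoAdj G • (1 : Matrix V V ℝ) - adjM G) *ᵥ x)
      = rhoAdj G * (x ⬝ᵥ x) - x ⬝ᵥ (adjM G *ᵥ x) := by
  rw [sub_mulVec, smul_mulVec, one_mulVec, dotProduct_sub, dotProduct_smul, smul_eq_mul]

lemma rayleigh_le [Nonempty V] (G : SimpleGraph V) (x : V → ℝ) :
    x ⬝ᵥ (adjM G *ᵥ x) ≤ rhoAdj G * (x ⬝ᵥ x) := by
  have h := (specRad_spec _ (adjM_isHermitian G)).1.dotProduct_mulVec_nonneg x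
  rw [star_trivial, ← rhoAdj_eq, rhoAdj_form] at h
  linarith

/-- A vector attaining the maximum of the Rayleigh quotient is an eigenvector. -/
lemma eigen_of_rayleigh_ge [Nonempty V] (G : SimpleGraph V) (x : V → ℝ)
    (h : rhoAdj G * (x ⬝ᵥ x) ≤ x ⬝ᵥ (adjM G *ᵥ x)) : adjM G *ᵥ x = rhoAdj G • x := by
  have hp := (specRad_spec _ (adjM_isHermitian G)).1
  have h0 : star x ⬝ᵥ ((rhoAdj G • (1 : Matrix V V ℝ) - adjM G) *ᵥ x) = 0 := by
    rw [star_trivial, rhoAdj_form]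
    linarith [rayleigh_le G x]
  have := (hp.dotProduct_mulVec_zero_iff x).1 h0
  rw [sub_mulVec, smul_mulVec, one_mulVec, sub_eq_zero] at this
  exact this.symm

/-- Perron–Frobenius for a connected graph: the entrywise absolute value of a top eigenvector is
again a top eigenvector, and its zero set is closed under adjacency. -/
lemma exists_perron (G : SimpleGraph V) (hG : G.Connected) :
    ∃ x : V → ℝ, (∀ a, 0 < x a) ∧ adjM G *ᵥ x = rhoAdj G • x := by
  have := hG.nonempty
  obtain ⟨v, hv, hev⟩ := (specRad_spec _ (adjM_isHermitian G)).2
  rw [← rhoAdj_eq] at hev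
  have hx : adjM G *ᵥ (fun a => |v a|) = rhoAdj G • (fun a => |v a|) := by
    apply eigen_of_rayleigh_ge
    have h1 : rhoAdj G * ((fun a => |v a|) ⬝ᵥ (fun a => |v a|)) = v ⬝ᵥ (adjM G *ᵥ v) := by
      rw [hev, dotProduct_smul, smul_eq_mul]
      simp [dotProduct]
    rw [h1]
    simp only [dotProduct, mulVec, Finset.mul_sum]
    refine Finset.sum_le_sum fun a _ => Finset.sum_le_sum fun b _ => ?_
    rw [adjM_apply]
    split_ifs
    · simpa [abs_mul] using le_abs_self (v a * v b)
    · simp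
  refine ⟨fun a => |v a|, ?_, hx⟩
  by_contra hcon
  push Not at hcon
  obtain ⟨a, ha⟩ := hcon
  have hstep : ∀ a b, G.Adj a b → v a = 0 → v b = 0 := by
    intro a b hab ha
    have h := congrFun hx a
    simp only [mulVec, dotProduct, Pi.smul_apply, ha, abs_zero, smul_zero] at h
    rw [Finset.sum_eq_zero_iff_of_nonneg] at h
    · simpa [adjM_apply, hab] using h b (Finset.mem_univ _)
    · intro c _
      rw [adjM_apply]
      split_ifs <;> simp
  have hwalk : ∀ a b, G.Walk a b → v a = 0 → v b = 0 := by
    intro a b w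
    induction w with
    | nil => exact id
    | cons h _ ih => exact fun ha => ih (hstep _ _ h ha)
  apply hv
  ext b
  obtain ⟨w⟩ := hG.preconnected a b
  exact hwalk a b w (by simpa using ha)

/-- The comparison principle behind every step: if the quadratic form of `H` at a Perron vector `x`
of `G` is at least that of `G`, then `ρ(G) ≤ ρ(H)`, and equality makes `x` an eigenvector
of `H` too. -/
lemma rhoAdj_compare [Nonempty V] (G H : SimpleGraph V) (x : V → ℝ) (hx : ∀ a, 0 < x a)
    (hev : adjM G *ᵥ x = rhoAdj G • x)
    (hq : x ⬝ᵥ (adjM G *ᵥ x) ≤ x ⬝ᵥ (adjM H *ᵥ x)) :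
    rhoAdj G ≤ rhoAdj H ∧ (rhoAdj H ≤ rhoAdj G → adjM H *ᵥ x = adjM G *ᵥ x) := by
  have hpos : 0 < x ⬝ᵥ x := by
    obtain ⟨a⟩ := ‹Nonempty V›
    exact Finset.sum_pos (fun b _ => mul_pos (hx b) (hx b)) ⟨a, Finset.mem_univ _⟩
  have h1 : x ⬝ᵥ (adjM G *ᵥ x) = rhoAdj G * (x ⬝ᵥ x) := by
    rw [hev, dotProduct_smul, smul_eq_mul]
  have h2 := rayleigh_le H x
  have h3 : rhoAdj G ≤ rhoAdj H := by
    refine le_of_mul_le_mul_right ?_ hpos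
    linarith
  refine ⟨h3, fun h => ?_⟩
  have h4 : rhoAdj H = rhoAdj G := le_antisymm h h3
  rw [hev, ← h4]
  apply eigen_of_rayleigh_ge
  rw [h4]
  linarith

/-- Spectral monotonicity: a connected proper spanning subgraph has strictly smaller radius. -/
lemma rhoAdj_mono (G H : SimpleGraph V) (hG : G.Connected) (hle : G ≤ H) :
    rhoAdj G ≤ rhoAdj H ∧ (rhoAdj H ≤ rhoAdj G → G = H) := by
  have := hG.nonempty
  obtain ⟨x, hx, hev⟩ := exists_perron G hG
  have hent : ∀ a b, adjM G a b * x b ≤ adjM H a b * x b := by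
    intro a b
    rw [adjM_apply, adjM_apply]
    by_cases h : G.Adj a b
    · simp [h, hle h]
    · simp only [h, if_false, zero_mul]
      split_ifs <;> simp [(hx b).le]
  have hc := rhoAdj_compare G H x hx hev (by
    refine Finset.sum_le_sum fun a _ => mul_le_mul_of_nonneg_left ?_ (hx a).le
    exact Finset.sum_le_sum fun b _ => hent a b)
  refine ⟨hc.1, fun h => le_antisymm hle fun a b hab => ?_⟩
  have h1 := congrFun (hc.2 h) a
  simp only [mulVec, dotProduct] at h1
  have h2 := (Finset.sum_eq_sum_iff_of_le (fun b _ => hent a b)).1 h1.symm b (Finset.mem_univ _)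
  by_contra hn
  simp [adjM_apply, hab, hn] at h2
  exact (hx b).ne h2

lemma eigen_transfer {U : Type*} [Fintype U] [DecidableEq U] (G : SimpleGraph V)
    (H : SimpleGraph U) (e : G ≃g H) (t : ℝ) (h : ∃ v : U → ℝ, v ≠ 0 ∧ adjM H *ᵥ v = t • v) :
    ∃ w : V → ℝ, w ≠ 0 ∧ adjM G *ᵥ w = t • w := by
  obtain ⟨v, hv, h⟩ := h
  refine ⟨v ∘ e, ?_, ?_⟩
  · intro h0
    apply hv
    ext u
    simpa using congrFun h0 (e.symm u)
  · ext a
    have := congrFun h (e a)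
    simp only [mulVec, dotProduct, Pi.smul_apply, Function.comp] at this ⊢
    rw [← this]
    refine Fintype.sum_equiv e.toEquiv _ _ fun b => ?_
    exact congrArg (· * v (e b)) (adjM_congr e.map_adj_iff.symm)

lemma rhoAdj_congr {U : Type*} [Fintype U] [DecidableEq U] (G : SimpleGraph V)
    (H : SimpleGraph U) (e : G ≃g H) : rhoAdj G = rhoAdj H := by
  rw [rhoAdj_eq, rhoAdj_eq, specRad, specRad]
  congr 1
  ext t
  exact ⟨eigen_transfer H G e.symm t, eigen_transfer G H e t⟩

/-- Quadratic forms split along a vertex set `P`: if `G` and `H` agree inside `P`, `H` contains `G`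
outside `P`, and each vertex outside `P` gains weight into `P`, then the form of `H` at the
positive vector `x` dominates. -/
lemma form_le (G H : SimpleGraph V) (x : V → ℝ) (hx : ∀ a, 0 < x a) (P : Finset V)
    (hPP : ∀ a ∈ P, ∀ b ∈ P, (H.Adj a b ↔ G.Adj a b))
    (hSS : ∀ a ∉ P, ∀ b ∉ P, G.Adj a b → H.Adj a b)
    (hSP : ∀ a ∉ P, ∑ b ∈ P, adjM G a b * x b ≤ ∑ b ∈ P, adjM H a b * x b) :
    x ⬝ᵥ (adjM G *ᵥ x) ≤ x ⬝ᵥ (adjM H *ᵥ x) := by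
  have split : ∀ K : SimpleGraph V, x ⬝ᵥ (adjM K *ᵥ x) =
      ∑ a ∈ P, ∑ b ∈ P, x a * (adjM K a b * x b) +
      ∑ a ∈ Pᶜ, ∑ b ∈ Pᶜ, x a * (adjM K a b * x b) +
      2 * ∑ a ∈ Pᶜ, x a * ∑ b ∈ P, adjM K a b * x b := by
    intro K
    have h1 : ∑ a ∈ P, ∑ b ∈ Pᶜ, x a * (adjM K a b * x b)
        = ∑ a ∈ Pᶜ, x a * ∑ b ∈ P, adjM K a b * x b := by
      rw [Finset.sum_comm]
      refine Finset.sum_congr rfl fun a _ => ?_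
      rw [Finset.mul_sum]
      refine Finset.sum_congr rfl fun b _ => ?_
      rw [adjM_apply, adjM_apply, K.adj_comm]
      ring
    have h2 : x ⬝ᵥ (adjM K *ᵥ x) = ∑ a, ∑ b, x a * (adjM K a b * x b) := by
      simp only [dotProduct, mulVec, Finset.mul_sum]
    have h3 : ∀ a, ∑ b, x a * (adjM K a b * x b) =
        ∑ b ∈ P, x a * (adjM K a b * x b) + ∑ b ∈ Pᶜ, x a * (adjM K a b * x b) :=
      fun a => (Finset.sum_add_sum_compl P _).symm
    rw [h2, ← Finset.sum_add_sum_compl P]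
    simp only [h3, Finset.sum_add_distrib, h1]
    simp only [← Finset.mul_sum]
    ring
  rw [split, split]
  have e1 : ∑ a ∈ P, ∑ b ∈ P, x a * (adjM G a b * x b)
      = ∑ a ∈ P, ∑ b ∈ P, x a * (adjM H a b * x b) := by
    refine Finset.sum_congr rfl fun a ha => Finset.sum_congr rfl fun b hb => ?_
    rw [adjM_congr (hPP a ha b hb)]
  have e2 : ∑ a ∈ Pᶜ, ∑ b ∈ Pᶜ, x a * (adjM G a b * x b)
      ≤ ∑ a ∈ Pᶜ, ∑ b ∈ Pᶜ, x a * (adjM H a b * x b) := by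
    refine Finset.sum_le_sum fun a ha => Finset.sum_le_sum fun b hb => ?_
    refine mul_le_mul_of_nonneg_left (mul_le_mul_of_nonneg_right ?_ (hx b).le) (hx a).le
    rw [adjM_apply, adjM_apply]
    by_cases h : G.Adj a b
    · simp [h, hSS a (by simpa using ha) b (by simpa using hb) h]
    · simp only [h, if_false]
      split_ifs <;> simp
  have e3 : ∑ a ∈ Pᶜ, x a * ∑ b ∈ P, adjM G a b * x b
      ≤ ∑ a ∈ Pᶜ, x a * ∑ b ∈ P, adjM H a b * x b :=
    Finset.sum_le_sum fun a ha =>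
      mul_le_mul_of_nonneg_left (hSP a (by simpa using ha)) (hx a).le
  linarith

end

/-! ### Level graphs -/

/-- The graph in which distinct vertices are adjacent exactly when their levels under `f` differ
by at most one. -/
def levelGraph {V : Type*} (f : V → ℕ) : SimpleGraph V where
  Adj a b := a ≠ b ∧ f a ≤ f b + 1 ∧ f b ≤ f a + 1
  symm := ⟨fun _ _ h => ⟨h.1.symm, h.2.2, h.2.1⟩⟩
  loopless := ⟨fun _ h => h.1 rfl⟩

/-- `f` is a level function of height `k`: its image is exactly `{0, …, k}`. -/
def IsLevel {V : Type*} (k : ℕ) (f : V → ℕ) : Prop :=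
  (∀ a, f a ≤ k) ∧ ∀ i ≤ k, ∃ a, f a = i

/-- `f` maximizes the spectral radius of the level graph among level functions of height `k`. -/
def IsMaxLevel {V : Type*} [Fintype V] [DecidableEq V] (k : ℕ) (f : V → ℕ) : Prop :=
  IsLevel k f ∧ ∀ g : V → ℕ, IsLevel k g → rhoAdj (levelGraph g) ≤ rhoAdj (levelGraph f)

lemma levelGraph_connected {V : Type*} {k : ℕ} {f : V → ℕ} (hf : IsLevel k f) :
    (levelGraph f).Connected := by
  obtain ⟨z, hz⟩ := hf.2 0 (Nat.zero_le _)
  have key : ∀ i a, f a = i → (levelGraph f).Reachable a z := by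
    intro i
    induction i with
    | zero =>
      intro a ha
      by_cases h : a = z
      · rw [h]
      · exact SimpleGraph.Adj.reachable ⟨h, by omega, by omega⟩
    | succ i ih =>
      intro a ha
      obtain ⟨b, hb⟩ := hf.2 i (by have := hf.1 a; omega)
      have hab : (levelGraph f).Adj a b :=
        ⟨by rintro rfl; omega, by omega, by omega⟩
      exact hab.reachable.trans (ih b hb)
  have : Nonempty V := ⟨z⟩
  exact ⟨fun a b => (key _ a rfl).trans (key _ b rfl).symm⟩

lemma isLevel_rev {V : Type*} {k : ℕ} {f : V → ℕ} (hf : IsLevel k f) :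
    IsLevel k (fun a => k - f a) := by
  refine ⟨fun a => Nat.sub_le _ _, fun i hi => ?_⟩
  obtain ⟨a, ha⟩ := hf.2 (k - i) (by omega)
  exact ⟨a, by simp only; omega⟩

lemma levelGraph_rev {V : Type*} {k : ℕ} {f : V → ℕ} (hf : IsLevel k f) :
    levelGraph (fun a => k - f a) = levelGraph f := by
  ext a b
  have := hf.1 a
  have := hf.1 b
  simp only [levelGraph]
  constructor <;> rintro ⟨h, h1, h2⟩ <;> exact ⟨h, by omega, by omega⟩

section
variable {V : Type*} [Fintype V] [DecidableEq V]
open Matrix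

lemma exists_maxLevel {k : ℕ} {f : V → ℕ} (hf : IsLevel k f) :
    ∃ g : V → ℕ, IsMaxLevel k g := by
  have hfin : {g : V → ℕ | IsLevel k g}.Finite :=
    (Set.finite_Icc (0 : V → ℕ) (fun _ => k)).subset
      fun g hg => ⟨fun a => Nat.zero_le _, fun a => hg.1 a⟩
  obtain ⟨g, hg, hmax⟩ := Set.exists_max_image _ (fun g => rhoAdj (levelGraph g)) hfin ⟨f, hf⟩
  exact ⟨g, hg, hmax⟩

/-! ### All levels but one are singletons -/

/-- In a maximal level graph all levels but one are singletons. Pick one representative per level;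
moving every other vertex to the level `c` whose window `c-1, c, c+1` of representatives has the
largest Perron weight does not decrease the quadratic form, and equality in the eigenvector
equations at the representatives of levels `c ± 1` shows that the vertices were there already. -/
lemma concentrate {k : ℕ} (hk : 2 ≤ k) {f : V → ℕ} (hf : IsMaxLevel k f) :
    ∃ c, 1 ≤ c ∧ c + 1 ≤ k ∧ ∀ a b, f a = f b → f a ≠ c → a = b := by
  obtain ⟨hlev, hmax⟩ := hf
  have hconn := levelGraph_connected hlev
  have := hconn.nonempty
  obtain ⟨x, hx, hev⟩ := exists_perron _ hconn
  have hex : ∀ i, ∃ a, i ≤ k → f a = i := by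
    intro i
    by_cases h : i ≤ k
    · obtain ⟨a, ha⟩ := hlev.2 i h
      exact ⟨a, fun _ => ha⟩
    · exact ⟨Classical.arbitrary V, fun h' => absurd h' h⟩
  choose v hv using hex
  set P : Finset V := (Finset.range (k + 1)).image v with hP
  have hvP : ∀ i ≤ k, v i ∈ P := fun i hi =>
    Finset.mem_image_of_mem _ (Finset.mem_range.2 (by omega))
  let W : ℕ → ℝ := fun j => ∑ b ∈ P, if j ≤ f b + 1 ∧ f b ≤ j + 1 then x b else 0
  obtain ⟨c, hc, hcmax⟩ := Finset.exists_max_image (Finset.range (k + 1)) W ⟨0, by simp⟩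
  have hck : c ≤ k := by simpa [Nat.lt_succ_iff] using hc
  have hcm : ∀ j ≤ k, W j ≤ W c := fun j hj => hcmax j (Finset.mem_range.2 (by omega))
  have hW0 : W 0 < W 1 := by
    refine Finset.sum_lt_sum (fun b _ => ?_) ⟨v 2, hvP 2 hk, ?_⟩
    · split_ifs <;> first | exact le_rfl | exact (hx b).le | omega
    · simp [hv 2 hk, hx]
  have hWk : W k < W (k - 1) := by
    refine Finset.sum_lt_sum (fun b _ => ?_) ⟨v (k - 2), hvP _ (by omega), ?_⟩
    · have := hlev.1 b
      split_ifs <;> first | exact le_rfl | exact (hx b).le | omega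
    · rw [hv (k - 2) (by omega), if_neg (by omega), if_pos (by omega)]
      exact hx _
  have hc1 : 1 ≤ c := by
    by_contra h
    have h0 : c = 0 := by omega
    have := hcm 1 (by omega)
    rw [h0] at this
    linarith
  have hc2 : c + 1 ≤ k := by
    by_contra h
    have h0 : c = k := by omega
    have := hcm (k - 1) (by omega)
    rw [h0] at this
    linarith
  refine ⟨c, hc1, hc2, ?_⟩
  let g : V → ℕ := fun a => if a ∈ P then f a else c
  have hgP : ∀ a ∈ P, g a = f a := fun a ha => if_pos ha
  have hgS : ∀ a ∉ P, g a = c := fun a ha => if_neg ha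
  have hg : IsLevel k g := by
    refine ⟨fun a => ?_, fun i hi => ⟨v i, ?_⟩⟩
    · by_cases ha : a ∈ P
      · rw [hgP a ha]; exact hlev.1 a
      · rw [hgS a ha]; exact hck
    · rw [hgP _ (hvP i hi), hv i hi]
  have hrow : ∀ (h : V → ℕ), (∀ b ∈ P, h b = f b) → ∀ a ∉ P,
      ∑ b ∈ P, adjM (levelGraph h) a b * x b = W (h a) := by
    intro h hh a ha
    refine Finset.sum_congr rfl fun b hb => ?_
    have hab : a ≠ b := by rintro rfl; exact ha hb
    simp [adjM_apply, levelGraph, hab, hh b hb]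
  have hcmp := rhoAdj_compare (levelGraph f) (levelGraph g) x hx hev (by
    refine form_le _ _ x hx P ?_ ?_ ?_
    · intro a ha b hb
      simp [levelGraph, hgP a ha, hgP b hb]
    · intro a ha b hb hab
      exact ⟨hab.1, by rw [hgS a ha, hgS b hb]; omega, by rw [hgS a ha, hgS b hb]; omega⟩
    · intro a ha
      rw [hrow f (fun _ _ => rfl) a ha, hrow g hgP a ha, hgS a ha]
      exact hcm _ (hlev.1 a))
  have heq := hcmp.2 (hmax g hg)
  have hadj : ∀ i ≤ k, c ≤ i + 1 → i ≤ c + 1 → ∀ s ∉ P, (levelGraph f).Adj (v i) s := by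
    intro i hi h1 h2 s hs
    have hrw := congrFun heq (v i)
    simp only [mulVec, dotProduct] at hrw
    have hle : ∀ b ∈ Finset.univ, adjM (levelGraph f) (v i) b * x b
        ≤ adjM (levelGraph g) (v i) b * x b := by
      intro b _
      refine mul_le_mul_of_nonneg_right ?_ (hx b).le
      by_cases hb : b ∈ P
      · exact (adjM_congr (by simp [levelGraph, hgP _ (hvP i hi), hgP b hb])).le
      · have hib : v i ≠ b := by rintro rfl; exact hb (hvP i hi)
        have : (levelGraph g).Adj (v i) b :=
          ⟨hib, by rw [hgP _ (hvP i hi), hgS b hb, hv i hi]; omega,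
            by rw [hgP _ (hvP i hi), hgS b hb, hv i hi]; omega⟩
        rw [adjM_apply, adjM_apply, if_pos this]
        split_ifs <;> simp
    have h3 := (Finset.sum_eq_sum_iff_of_le hle).1 hrw.symm s (Finset.mem_univ _)
    have his : v i ≠ s := by rintro rfl; exact hs (hvP i hi)
    have h4 : (levelGraph g).Adj (v i) s :=
      ⟨his, by rw [hgP _ (hvP i hi), hgS s hs, hv i hi]; omega,
        by rw [hgP _ (hvP i hi), hgS s hs, hv i hi]; omega⟩
    by_contra hn
    simp only [adjM_apply, h4, hn, if_true, if_false, zero_mul, one_mul] at h3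
    exact (hx s).ne h3
  have hS : ∀ s ∉ P, f s = c := by
    intro s hs
    have h1 := hadj (c - 1) (by omega) (by omega) (by omega) s hs
    have h2 := hadj (c + 1) (by omega) (by omega) (by omega) s hs
    have h3 := hv (c - 1) (by omega)
    have h4 := hv (c + 1) (by omega)
    have := h1.2.2
    have := h2.2.1
    omega
  have hPv : ∀ a ∈ P, a = v (f a) := by
    intro a ha
    obtain ⟨i, hi, rfl⟩ := Finset.mem_image.1 ha
    rw [hv i (by simpa [Nat.lt_succ_iff] using hi)]
  intro a b hab hac
  have ha : a ∈ P := by by_contra h; exact hac (hS a h)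
  have hb : b ∈ P := by by_contra h; exact hac (hab.trans (hS b h))
  rw [hPv a ha, hPv b hb, hab]

/-! ### The big level is central -/

/-- Total weight of `x` on the level `i` of `f`. -/
def levelSum (f : V → ℕ) (x : V → ℝ) (i : ℕ) : ℝ := ∑ a, if f a = i then x a else 0

lemma levelSum_nonneg {f : V → ℕ} {x : V → ℝ} (hx : ∀ a, 0 < x a) (i : ℕ) :
    0 ≤ levelSum f x i :=
  Finset.sum_nonneg fun a _ => by split_ifs <;> simp [(hx a).le]

/-- The eigenvector equation of a level graph, in the closed-neighbourhood form. -/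
lemma level_eigen {f : V → ℕ} {x : V → ℝ} {r : ℝ} (hev : adjM (levelGraph f) *ᵥ x = r • x)
    (a : V) : (r + 1) * x a = (if f a = 0 then 0 else levelSum f x (f a - 1)) +
      levelSum f x (f a) + levelSum f x (f a + 1) := by
  have h := congrFun hev a
  simp only [mulVec, dotProduct, Pi.smul_apply, smul_eq_mul] at h
  have h1 : x a = ∑ b, if b = a then x b else 0 := by simp
  have h2 : (if f a = 0 then 0 else levelSum f x (f a - 1)) =
      ∑ b, if f a = 0 then 0 else if f b = f a - 1 then x b else 0 := by
    split_ifs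
    · simp
    · rfl
  rw [add_mul, one_mul, ← h, h2]
  rw [h1, levelSum, levelSum, ← Finset.sum_add_distrib, ← Finset.sum_add_distrib,
    ← Finset.sum_add_distrib]
  refine Finset.sum_congr rfl fun b _ => ?_
  rw [adjM_apply]
  by_cases hab : b = a
  · subst hab
    simp
    omega
  · have hba : a ≠ b := fun h => hab h.symm
    simp only [levelGraph, hab, ne_eq, hba, not_false_eq_true, true_and, if_false, add_zero]
    split_ifs <;> first | omega | simp

lemma levelSum_single {f : V → ℕ} {c : ℕ} (hinj : ∀ a b, f a = f b → f a ≠ c → a = b)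
    (x : V → ℝ) {a : V} (ha : f a ≠ c) : levelSum f x (f a) = x a := by
  rw [levelSum, Finset.sum_eq_single a]
  · simp
  · intro b _ hb
    rw [if_neg]
    intro h
    exact hb (hinj a b h.symm ha).symm
  · simp

/-- The sequence `0, 1, ρ, ρ² - 1, …`: values of an eigenvector along a pendant path. -/
def pathSeq (r : ℝ) : ℕ → ℝ
  | 0 => 0
  | 1 => 1
  | n + 2 => r * pathSeq r (n + 1) - pathSeq r n

lemma pathSeq_growth {r : ℝ} (hr : 5 / 2 ≤ r) (n : ℕ) :
    0 ≤ pathSeq r n ∧ 2 * pathSeq r n ≤ pathSeq r (n + 1) ∧ 0 < pathSeq r (n + 1) := by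
  induction n with
  | zero => simp [pathSeq]
  | succ n ih =>
    obtain ⟨h1, h2, h3⟩ := ih
    have : pathSeq r (n + 2) = r * pathSeq r (n + 1) - pathSeq r n := rfl
    refine ⟨h3.le, ?_, ?_⟩ <;> rw [this] <;> nlinarith

lemma pathSeq_mono {r : ℝ} (hr : 5 / 2 ≤ r) : Monotone (pathSeq r) :=
  monotone_nat_of_le_succ fun n => by
    obtain ⟨h1, h2, _⟩ := pathSeq_growth hr n
    linarith

lemma eq_pathSeq {r : ℝ} {c : ℕ} {Y : ℕ → ℝ} (h0 : 0 < c → Y 1 = r * Y 0)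
    (h : ∀ i, i + 1 < c → Y (i + 2) = r * Y (i + 1) - Y i) (i : ℕ) (hi : i ≤ c) :
    Y i = pathSeq r (i + 1) * Y 0 := by
  induction i using Nat.twoStepInduction with
  | zero => simp [pathSeq]
  | one => rw [h0 (by omega)]; simp [pathSeq]
  | more i ih1 ih2 =>
    rw [h i (by omega), ih2 (by omega), ih1 (by omega)]
    have : pathSeq r (i + 2 + 1) = r * pathSeq r (i + 2) - pathSeq r (i + 1) := rfl
    rw [this]
    ring

/-- In a maximal level graph whose only non-singleton level is `c`, the path below `c` exceeds the
path above it by at most one vertex. Otherwise the Perron entry at the top end is at least the entry next to the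
bottom end, and moving the bottom vertex to the top improves the graph. -/
lemma balance {k c : ℕ} (hk : 2 ≤ k) {f : V → ℕ} (hf : IsMaxLevel k f) (hc1 : 1 ≤ c)
    (hc2 : c + 1 ≤ k) (hinj : ∀ a b, f a = f b → f a ≠ c → a = b)
    {s s' : V} (hss : s ≠ s') (hs : f s = c) (hs' : f s' = c) : 2 * c ≤ k + 1 := by
  by_contra hcon
  obtain ⟨hlev, hmax⟩ := hf
  have hconn := levelGraph_connected hlev
  have := hconn.nonempty
  obtain ⟨x, hx, hev⟩ := exists_perron _ hconn
  set r := rhoAdj (levelGraph f) with hr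
  set Y := levelSum f x with hY
  have hY0 : ∀ i, 0 ≤ Y i := levelSum_nonneg hx
  have hYtop : Y (k + 1) = 0 := by
    refine Finset.sum_eq_zero fun a _ => ?_
    have := hlev.1 a
    rw [if_neg (by omega)]
  have hrec : ∀ i, i + 1 ≤ k → i + 1 ≠ c → r * Y (i + 1) = Y i + Y (i + 2) := by
    intro i hi hic
    obtain ⟨a, ha⟩ := hlev.2 (i + 1) hi
    have h1 := level_eigen hev a
    have h2 := levelSum_single hinj x (a := a) (by omega)
    rw [ha] at h1 h2
    simp only [Nat.add_eq_zero_iff, one_ne_zero, and_false, if_false, Nat.add_sub_cancel] at h1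
    change (r + 1) * x a = Y i + Y (i + 1) + Y (i + 2) at h1
    change Y (i + 1) = x a at h2
    rw [← h2] at h1
    linarith
  obtain ⟨z, hz⟩ := hlev.2 0 (Nat.zero_le _)
  have hYz : Y 0 = x z := by
    have := levelSum_single hinj x (a := z) (by omega)
    rwa [hz] at this
  have hrec0 : r * Y 0 = Y 1 := by
    have h1 := level_eigen hev z
    rw [hz, if_pos rfl] at h1
    change (r + 1) * x z = 0 + Y 0 + Y 1 at h1
    rw [← hYz] at h1
    linarith
  -- Two vertices on level `c` and the eigenvector equations on levels `c - 1`, `c`, `c + 1`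
  -- give `ρ² - ρ ≥ 4`, hence `ρ ≥ 5/2`.
  have hYc : x s + x s' ≤ Y c := by
    have h1 : ∑ a ∈ ({s, s'} : Finset V), (if f a = c then x a else 0) ≤ Y c :=
      Finset.sum_le_sum_of_subset_of_nonneg (Finset.subset_univ _)
        fun a _ _ => by split_ifs <;> simp [(hx a).le]
    rwa [Finset.sum_pair hss, if_pos hs, if_pos hs'] at h1
  obtain ⟨d, rfl⟩ : ∃ d, c = d + 1 := ⟨c - 1, by omega⟩
  have hbig : 5 / 2 ≤ r := by
    have e1 := level_eigen hev s
    have e2 := level_eigen hev s'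
    rw [hs, if_neg (by omega), Nat.add_sub_cancel] at e1
    rw [hs', if_neg (by omega), Nat.add_sub_cancel] at e2
    change (r + 1) * x s = Y d + Y (d + 1) + Y (d + 2) at e1
    change (r + 1) * x s' = Y d + Y (d + 1) + Y (d + 2) at e2
    have t0 : 0 < Y (d + 1) := by linarith [hx s, hx s']
    have r1 : 0 < r + 1 := by
      by_contra h
      have : (r + 1) * x s ≤ 0 := mul_nonpos_of_nonpos_of_nonneg (not_lt.1 h) (hx s).le
      linarith [hY0 d, hY0 (d + 2)]
    have e3 : 2 * (Y d + Y (d + 1) + Y (d + 2)) ≤ (r + 1) * Y (d + 1) := by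
      have := mul_le_mul_of_nonneg_left hYc r1.le
      linarith
    have e4 : Y (d + 1) ≤ r * Y d := by
      rcases d with _ | d
      · omega
      · rw [hrec d (by omega) (by omega)]
        linarith [hY0 d]
    have e5 : Y (d + 1) ≤ r * Y (d + 2) := by
      rw [hrec (d + 1) (by omega) (by omega)]
      linarith [hY0 (d + 3)]
    have r0 : 0 < r := by
      by_contra h
      have : r * Y d ≤ 0 := mul_nonpos_of_nonpos_of_nonneg (not_lt.1 h) (hY0 d)
      linarith
    have e6 : 4 * Y (d + 1) ≤ (r * (r - 1)) * Y (d + 1) := by nlinarith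
    have e7 : 4 ≤ r * (r - 1) := le_of_mul_le_mul_right e6 t0
    nlinarith
  have hlow : Y (d + 1) = pathSeq r (d + 1 + 1) * Y 0 :=
    eq_pathSeq (c := d + 1) (fun _ => hrec0.symm)
      (fun i hi => by rw [hrec i (by omega) (by omega)]; ring) _ le_rfl
  obtain ⟨e, rfl⟩ : ∃ e, k = d + 1 + e := ⟨k - (d + 1), by omega⟩
  have hupp : Y (d + 1) = pathSeq r (e + 1) * Y (d + 1 + e) := by
    have h := eq_pathSeq (r := r) (c := e) (Y := fun j => Y (d + 1 + e - j)) (fun _ => by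
        have h1 := hrec (d + e) (by omega) (by omega)
        rw [show d + e + 2 = d + 1 + e + 1 by omega, hYtop,
          show d + e + 1 = d + 1 + e by omega] at h1
        simp only [Nat.sub_zero]
        rw [show d + 1 + e - 1 = d + e by omega, h1, add_zero])
      (fun i hi => by
        have h1 := hrec (d + 1 + e - (i + 2)) (by omega) (by omega)
        rw [show d + 1 + e - (i + 2) + 2 = d + 1 + e - i by omega,
          show d + 1 + e - (i + 2) + 1 = d + 1 + e - (i + 1) by omega] at h1
        linarith) e le_rfl
    simpa using h
  have hYk : r * Y 0 ≤ Y (d + 1 + e) := by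
    have g1 : pathSeq r (e + 1 + 2) ≤ pathSeq r (d + 1 + 1) := pathSeq_mono hbig (by omega)
    have g2 : pathSeq r (e + 1 + 2) = r * pathSeq r (e + 1 + 1) - pathSeq r (e + 1) := rfl
    obtain ⟨g3, g4, -⟩ := pathSeq_growth hbig (e + 1)
    have g5 : 0 < pathSeq r (e + 1) := (pathSeq_growth hbig e).2.2
    have g6 : r * pathSeq r (e + 1) ≤ pathSeq r (d + 1 + 1) := by nlinarith
    have g7 := mul_le_mul_of_nonneg_right g6 (hY0 0)
    refine le_of_mul_le_mul_left ?_ g5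
    linarith
  set k := d + 1 + e with hkdef
  obtain ⟨t, ht⟩ := hlev.2 k le_rfl
  have hYt : Y k = x t := by
    have := levelSum_single hinj x (a := t) (by omega)
    rwa [ht] at this
  have hz1 : ∀ a, a ≠ z → 1 ≤ f a := by
    intro a ha
    by_contra h
    exact ha (hinj a z (by omega) (by omega))
  let g : V → ℕ := fun a => if f a = 0 then k else f a - 1
  have hgz : g z = k := if_pos hz
  have hga : ∀ a, a ≠ z → g a = f a - 1 := fun a ha => if_neg (by have := hz1 a ha; omega)
  have hg : IsLevel k g := by
    refine ⟨fun a => ?_, fun i hi => ?_⟩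
    · have := hlev.1 a
      by_cases ha : a = z
      · rw [ha, hgz]
      · rw [hga a ha]; omega
    · by_cases hik : i = k
      · exact ⟨z, by rw [hgz, hik]⟩
      · obtain ⟨a, ha⟩ := hlev.2 (i + 1) (by omega)
        exact ⟨a, by rw [hga a (by rintro rfl; omega), ha]; omega⟩
  have htz : t ≠ z := by rintro rfl; omega
  have hsame : ∀ a b, a ≠ z → b ≠ z → ((levelGraph g).Adj a b ↔ (levelGraph f).Adj a b) := by
    intro a b ha hb
    have := hz1 a ha
    have := hz1 b hb
    simp only [levelGraph, hga a ha, hga b hb]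
    constructor <;> rintro ⟨h, h1, h2⟩ <;> exact ⟨h, by omega, by omega⟩
  have hgadj : (levelGraph g).Adj z t :=
    ⟨htz.symm, by rw [hgz, hga t htz, ht]; omega, by rw [hgz, hga t htz, ht]; omega⟩
  have hcmp := rhoAdj_compare (levelGraph f) (levelGraph g) x hx hev (by
    refine form_le _ _ x hx (Finset.univ.erase z) ?_ ?_ ?_
    · intro a ha b hb
      exact hsame a b (Finset.ne_of_mem_erase ha) (Finset.ne_of_mem_erase hb)
    · intro a ha b hb hab
      have ha : a = z := by simpa using ha
      have hb : b = z := by simpa using hb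
      exact absurd (ha.trans hb.symm) hab.1
    · intro a ha
      have ha : a = z := by simpa using ha
      rw [ha]
      have h1 : ∑ b ∈ Finset.univ.erase z, adjM (levelGraph f) z b * x b = r * Y 0 := by
        have h2 := congrFun hev z
        simp only [mulVec, dotProduct, Pi.smul_apply, smul_eq_mul] at h2
        rw [hYz, ← h2, ← Finset.add_sum_erase _ _ (Finset.mem_univ z)]
        simp [adjM_apply]
      have h3 : x t ≤ ∑ b ∈ Finset.univ.erase z, adjM (levelGraph g) z b * x b := by
        have h4 := Finset.single_le_sum (s := Finset.univ.erase z)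
          (f := fun b => adjM (levelGraph g) z b * x b) (fun b _ => by
            simp only [adjM_apply]
            split_ifs <;> simp [(hx b).le]) (Finset.mem_erase.2 ⟨htz, Finset.mem_univ _⟩)
        simpa [adjM_apply, hgadj] using h4
      rw [h1]
      linarith)
  have heq := congrFun (hcmp.2 (hmax g hg)) t
  simp only [mulVec, dotProduct] at heq
  have hnadj : ¬ (levelGraph f).Adj t z := by
    rintro ⟨-, h1, h2⟩
    omega
  have hle : ∀ b ∈ Finset.univ, adjM (levelGraph f) t b * x b
      ≤ adjM (levelGraph g) t b * x b := by
    intro b _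
    by_cases hb : b = z
    · simp [hb, adjM_apply, hgadj.symm, hnadj, (hx z).le]
    · rw [adjM_congr (hsame t b htz hb)]
  have h3 := (Finset.sum_eq_sum_iff_of_le hle).1 heq.symm z (Finset.mem_univ _)
  simp only [adjM_apply, hgadj.symm, hnadj, if_true, if_false, zero_mul, one_mul] at h3
  exact (hx z).ne h3

end

/-! ### Identification with the bug graph -/

lemma fiber_card {W : Type*} [Fintype W] {k c : ℕ} (hck : c ≤ k) {h : W → ℕ} (hh : IsLevel k h)
    (hi : ∀ a b, h a = h b → h a ≠ c → a = b) (i : ℕ) :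
    (Finset.univ.filter fun a => h a = i).card =
      if i = c then Fintype.card W - k else if i ≤ k then 1 else 0 := by
  have hone : ∀ i ≠ c, (Finset.univ.filter fun a => h a = i).card = if i ≤ k then 1 else 0 := by
    intro i hic
    split_ifs with hik
    · obtain ⟨a, ha⟩ := hh.2 i hik
      rw [Finset.card_eq_one]
      refine ⟨a, ?_⟩
      ext b
      simp only [Finset.mem_filter, Finset.mem_univ, true_and, Finset.mem_singleton]
      exact ⟨fun hb => hi b a (by omega) (by omega), fun hb => by rw [hb, ha]⟩
    · rw [Finset.card_eq_zero, Finset.filter_eq_empty_iff]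
      intro a _ ha
      have := hh.1 a
      omega
  by_cases hic : i = c
  · have hsum := Finset.card_eq_sum_card_fiberwise (f := h) (s := Finset.univ)
      (t := Finset.range (k + 1)) (fun a _ => by have := hh.1 a; simp; omega)
    have hc : c ∈ Finset.range (k + 1) := Finset.mem_range.2 (by omega)
    rw [← Finset.add_sum_erase _ _ hc, Finset.sum_congr rfl (g := fun _ => 1)] at hsum
    · rw [Finset.sum_const, Finset.card_erase_of_mem hc, Finset.card_range, smul_eq_mul,
        Finset.card_univ] at hsum
      rw [if_pos hic, hic]
      omega
    · intro j hj
      rw [Finset.mem_erase, Finset.mem_range] at hj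
      rw [hone j hj.1, if_pos (by omega)]
  · rw [if_neg hic, hone i hic]

/-- Two level functions of the same height on equinumerous types, both injective off the level `c`,
differ by a relabelling: their fibres have the same cardinalities. -/
lemma exists_equiv {V U : Type*} [Fintype V] [Fintype U] {k c : ℕ} (hck : c ≤ k)
    {f : V → ℕ} {g : U → ℕ} (hf : IsLevel k f) (hg : IsLevel k g)
    (hfi : ∀ a b, f a = f b → f a ≠ c → a = b) (hgi : ∀ a b, g a = g b → g a ≠ c → a = b)
    (hcard : Fintype.card V = Fintype.card U) : ∃ e : V ≃ U, ∀ a, g (e a) = f a := by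
  have hfib : ∀ i, Nonempty ({a // f a = i} ≃ {b // g b = i}) := by
    intro i
    rw [← Fintype.card_eq, Fintype.card_subtype, Fintype.card_subtype,
      fiber_card hck hf hfi, fiber_card hck hg hgi, hcard]
  have E := fun i => (hfib i).some
  refine ⟨(Equiv.sigmaFiberEquiv f).symm.trans
    ((Equiv.sigmaCongrRight E).trans (Equiv.sigmaFiberEquiv g)), fun a => ?_⟩
  exact (E (f a) ⟨a, rfl⟩).2

/-- The bug graph is a level graph whose levels are singletons off level `⌊k/2⌋`, and this
determines it up to isomorphism. -/
lemma iso_bug {V : Type*} [Fintype V] [DecidableEq V] {n k : ℕ} (hk : 2 ≤ k)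
    (hcard : Fintype.card V = n) {f : V → ℕ} (hf : IsLevel k f)
    (hfi : ∀ a b, f a = f b → f a ≠ k / 2 → a = b) :
    Nonempty (levelGraph f ≃g bugGraph (n - k + 2) (k / 2) ((k + 1) / 2)) := by
  have hnk : k + 1 ≤ n := by
    rw [← hcard, ← Finset.card_range (k + 1), ← Finset.card_univ]
    have : Nonempty V := (levelGraph_connected hf).nonempty
    choose! v hv using hf.2
    refine Finset.card_le_card_of_injOn v (fun _ _ => Finset.mem_univ _) ?_
    intro i hi j hj hij
    have hi : i < k + 1 := by simpa using hi
    have hj : j < k + 1 := by simpa using hj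
    rw [← hv i (by omega), ← hv j (by omega), hij]
  obtain ⟨m, rfl⟩ : ∃ m, n = k + 1 + m := ⟨n - (k + 1), by omega⟩
  obtain ⟨q, r, hq, hr, hqr, hq1⟩ : ∃ q r, k / 2 = q ∧ (k + 1) / 2 = r ∧ q + r = k ∧ 1 ≤ q :=
    ⟨_, _, rfl, rfl, by omega, by omega⟩
  rw [hq] at hfi
  rw [hq, hr, show k + 1 + m - k + 2 = m + 3 by omega]
  have hr1 : 1 ≤ r := by omega
  clear hq hr
  -- the big level of the bug graph consists of the vertices `q, …, q + m`
  let g : Fin (m + 3 + q + r - 2) → ℕ := fun i =>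
    if i.val < q then i.val else if i.val ≤ q + m then q else i.val - m
  have hgdef : ∀ i, g i = if i.val < q then i.val else if i.val ≤ q + m then q else i.val - m :=
    fun _ => rfl
  have hg : IsLevel k g := by
    refine ⟨fun i => ?_, fun i hi => ?_⟩
    · have := i.isLt
      rw [hgdef]
      split_ifs <;> omega
    · by_cases h : i ≤ q
      · exact ⟨⟨i, by omega⟩, by rw [hgdef]; simp only; split_ifs <;> omega⟩
      · exact ⟨⟨i + m, by omega⟩, by rw [hgdef]; simp only; split_ifs <;> omega⟩
  have hgi : ∀ a b, g a = g b → g a ≠ q → a = b := by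
    intro a b h1 h2
    rw [hgdef, hgdef] at h1
    rw [hgdef] at h2
    ext
    split_ifs at h1 h2 <;> omega
  have hbug : bugGraph (m + 3) q r = levelGraph g := by
    ext a b
    have := a.isLt
    have := b.isLt
    simp only [bugGraph, SimpleGraph.fromRel_adj, levelGraph, hgdef, ne_eq, Fin.ext_iff]
    split_ifs <;> omega
  obtain ⟨e, he⟩ := exists_equiv (by omega) hf hg hfi hgi (by rw [hcard, Fintype.card_fin]; omega)
  rw [hbug]
  exact ⟨⟨e, by intro a b; simp [levelGraph, he]⟩⟩

/-- Every maximal level graph is the bug graph. If `c = ⌈k/2⌉` rather than `⌊k/2⌋`, the levels are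
reversed first; if no level has two vertices the graph is a path and `c` plays no role. -/
lemma iso_of_max {V : Type*} [Fintype V] [DecidableEq V] {n k : ℕ} (hk : 2 ≤ k)
    (hcard : Fintype.card V = n) {f : V → ℕ} (hf : IsMaxLevel k f) :
    Nonempty (levelGraph f ≃g bugGraph (n - k + 2) (k / 2) ((k + 1) / 2)) := by
  obtain ⟨c, hc1, hc2, hinj⟩ := concentrate hk hf
  by_cases hbig : ∃ s s', s ≠ s' ∧ f s = c ∧ f s' = c
  · obtain ⟨s, s', hss, hs, hs'⟩ := hbig
    have hinj' : ∀ a b, k - f a = k - f b → k - f a ≠ k - c → a = b := by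
      intro a b h1 h2
      have := hf.1.1 a
      have := hf.1.1 b
      exact hinj a b (by omega) (by omega)
    have hmax' : IsMaxLevel k (fun a => k - f a) :=
      ⟨isLevel_rev hf.1, fun g hg => by rw [levelGraph_rev hf.1]; exact hf.2 g hg⟩
    have h1 := balance hk hf hc1 hc2 hinj hss hs hs'
    have h2 := balance hk hmax' (c := k - c) (by omega) (by omega) hinj' hss
      (by omega) (by omega)
    by_cases hck : c = k / 2
    · exact iso_bug hk hcard hf.1 (hck ▸ hinj)
    · rw [← levelGraph_rev hf.1]
      exact iso_bug hk hcard (isLevel_rev hf.1) (by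
        have : k - c = k / 2 := by omega
        exact this ▸ hinj')
  · refine iso_bug hk hcard hf.1 fun a b hab _ => ?_
    by_contra hne
    by_cases hac : f a = c
    · exact hbig ⟨a, b, hne, hac, by omega⟩
    · exact hne (hinj a b hab hac)

/-- Truncated distance from an end of a diametral pair is a level function, and `G` is a subgraph
of its level graph. -/
lemma exists_level {V : Type*} [Fintype V] (G : SimpleGraph V) {k : ℕ}
    (hconn : G.Connected) (hdiam : k ≤ G.diam) :
    ∃ f : V → ℕ, IsLevel k f ∧ G ≤ levelGraph f := by
  have := hconn.nonempty
  obtain ⟨u, v, huv⟩ := G.exists_dist_eq_diam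
  refine ⟨fun a => min (G.dist u a) k, ⟨fun a => min_le_right _ _, fun i hi => ?_⟩, ?_⟩
  · obtain ⟨p, hp⟩ := hconn.exists_walk_length_eq_dist u v
    refine ⟨p.getVert i, ?_⟩
    have h1 : G.dist u (p.getVert i) ≤ i :=
      (SimpleGraph.dist_le (p.take i)).trans (by simp)
    have h2 : G.dist (p.getVert i) v ≤ p.length - i :=
      (SimpleGraph.dist_le (p.drop i)).trans (by simp)
    have h3 := hconn.dist_triangle (u := u) (v := p.getVert i) (w := v)
    simp only
    omega
  · intro a b hab
    have h1 := hconn.dist_triangle (u := u) (v := a) (w := b)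
    have h2 := hconn.dist_triangle (u := u) (v := b) (w := a)
    have h3 : G.dist a b = 1 := SimpleGraph.dist_eq_one_iff_adj.2 hab
    have h4 : G.dist b a = 1 := SimpleGraph.dist_eq_one_iff_adj.2 hab.symm
    exact ⟨hab.ne, by simp only; omega, by simp only; omega⟩

/-- Hansen–Stevanović. Let `G` be a graph of order `n` with
diameter at least `k`, where `k ≥ 2`. Then
`ρ(A(G)) ≤ ρ(A(B_{n−k+2,⌊k/2⌋,⌈k/2⌉}))`, with equality if and only if `G` is
isomorphic to `B_{n−k+2,⌊k/2⌋,⌈k/2⌉}`. -/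
theorem adj_spectralRadius_le_of_diam {n k : ℕ}
    {V : Type*} [Fintype V] [DecidableEq V] (G : SimpleGraph V)
    (hcard : Fintype.card V = n) (hk : 2 ≤ k)
    (hconn : G.Connected) (hdiam : k ≤ G.diam) :
    rhoAdj G ≤ rhoAdj (bugGraph (n - k + 2) (k / 2) ((k + 1) / 2)) ∧
      (rhoAdj G = rhoAdj (bugGraph (n - k + 2) (k / 2) ((k + 1) / 2)) ↔
        Nonempty (G ≃g bugGraph (n - k + 2) (k / 2) ((k + 1) / 2))) := by
  obtain ⟨f, hf, hGf⟩ := exists_level G hconn hdiam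
  obtain ⟨g, hg⟩ := exists_maxLevel hf
  obtain ⟨e⟩ := iso_of_max hk hcard hg
  have hge := rhoAdj_congr _ _ e
  obtain ⟨h1, h2⟩ := rhoAdj_mono G _ hconn hGf
  have h3 := hg.2 f hf
  rw [← hge]
  refine ⟨h1.trans h3, fun h => ?_, fun ⟨i⟩ => ?_⟩
  · have hfm : IsMaxLevel k f := ⟨hf, fun j hj => by linarith [hg.2 j hj]⟩
    rw [h2 (by linarith)]
    exact iso_of_max hk hcard hfm
  · rw [hge]
    exact rhoAdj_congr _ _ i
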